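/- Let X and Y be independent positive real random variables with strictly positive, continuous densities f_X and f_Y on (0,∞). If V = X + Y and U = X/(X+Y) are independent, then there exist a > 0 and p₁, p₂ > 0 such that X has Gamma distribution with shape p₁ and rate a, and Y has Gamma distribution with shape p₂ and rate a; i.e., f_X(x) = a^{p₁}/Γ(p₁) · x^{p₁−1} e^{−ax} and f_Y(x) = a^{p₂}/Γ(p₂) · x^{p₂−1} e^{−ax} for all x > 0. -/

import Mathlib

open MeasureTheory ProbabilityTheory

/-- law of (V,U) on rectangles -/
lemma luk_rect {Ω : Type*} [MeasurableSpace Ω]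
    (μ : Measure Ω) [IsProbabilityMeasure μ]
    (X Y : Ω → ℝ) (hX : Measurable X) (hY : Measurable Y)
    (fX fY : ℝ → ℝ)
    (hfXpos : ∀ x > (0:ℝ), 0 < fX x)
    (hfXcont : ContinuousOn fX (Set.Ioi 0)) (hfYcont : ContinuousOn fY (Set.Ioi 0))
    (hXd : μ.map X = (volume.restrict (Set.Ioi 0)).withDensity fun x => ENNReal.ofReal (fX x))
    (hYd : μ.map Y = (volume.restrict (Set.Ioi 0)).withDensity fun x => ENNReal.ofReal (fY x))
    (hXY : IndepFun X Y μ) (A B : Set ℝ) (hA : MeasurableSet A) (hB : MeasurableSet B)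
    (hA0 : A ⊆ Set.Ioi 0) (hB0 : B ⊆ Set.Ioo 0 1) :
    μ ((fun ω => X ω + Y ω) ⁻¹' A ∩ (fun ω => X ω / (X ω + Y ω)) ⁻¹' B) =
      ∫⁻ z in A ×ˢ B, ENNReal.ofReal (z.1 * fX (z.2 * z.1) * fY ((1 - z.2) * z.1)) := by
  have hmX : AEMeasurable (fun x => ENNReal.ofReal (fX x)) (volume.restrict (Set.Ioi 0)) :=
    (hfXcont.aemeasurable measurableSet_Ioi).ennreal_ofReal
  have hmY : AEMeasurable (fun x => ENNReal.ofReal (fY x)) (volume.restrict (Set.Ioi 0)) :=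
    (hfYcont.aemeasurable measurableSet_Ioi).ennreal_ofReal
  have hjoint := hXY.map_prod_eq_prod_map_map hX.aemeasurable hY.aemeasurable
  rw [hXd, hYd, prod_withDensity₀ hmX hmY, Measure.prod_restrict] at hjoint
  let T : ℝ × ℝ → ℝ × ℝ := fun z => (z.2 * z.1, (1 - z.2) * z.1)
  let T' : ℝ × ℝ → (ℝ × ℝ →L[ℝ] ℝ × ℝ) := fun z =>
    (Matrix.toLin (.finTwoProd ℝ) (.finTwoProd ℝ)
      !![z.2, z.1; 1 - z.2, -z.1]).toContinuousLinearMap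
  have hT' : ∀ z, HasFDerivAt T (T' z) z := by
    intro z
    simp only [T', T]
    rw [Matrix.toLin_finTwoProd_toContinuousLinearMap]
    have h1 : HasFDerivAt (fun z : ℝ × ℝ => z.2) (ContinuousLinearMap.snd ℝ ℝ ℝ) z := hasFDerivAt_snd
    have h2 : HasFDerivAt (fun z : ℝ × ℝ => z.1) (ContinuousLinearMap.fst ℝ ℝ ℝ) z := hasFDerivAt_fst
    convert! HasFDerivAt.prodMk (𝕜 := ℝ) (h1.mul h2) ((h1.const_sub 1).mul h2) using 2 <;>
    simp [neg_smul _ (ContinuousLinearMap.snd ℝ ℝ ℝ)]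
  have hdet : ∀ z, (T' z).det = -z.1 := by
    intro z
    simp only [T', LinearMap.det_toContinuousLinearMap, LinearMap.det_toLin,
      Matrix.det_fin_two_of]
    ring
  have hinj : Set.InjOn T (A ×ˢ B) := by
    rintro ⟨v, u⟩ ⟨hv, hu⟩ ⟨v', u'⟩ ⟨hv', hu'⟩ h
    have hv0 : 0 < v := hA0 hv
    simp only [T, Prod.mk.injEq] at h
    have e1 : v = v' := by linarith [h.1, h.2]
    subst e1
    have := mul_right_cancel₀ hv0.ne' h.1
    simp [this]
  have himg : T '' (A ×ˢ B) = {z : ℝ × ℝ | z.1 + z.2 ∈ A ∧ z.1 / (z.1 + z.2) ∈ B} := by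
    ext ⟨x, y⟩
    constructor
    · rintro ⟨⟨v, u⟩, ⟨hv, hu⟩, h⟩
      have hv0 : 0 < v := hA0 hv
      simp only [T, Prod.mk.injEq] at h
      have e1 : x + y = v := by rw [← h.1, ← h.2]; ring
      have e2 : x / (x + y) = u := by rw [e1, ← h.1]; field_simp
      exact ⟨by simpa only [e1] using hv, by simpa only [e2] using hu⟩
    · rintro ⟨h1, h2⟩
      have hv0 : 0 < x + y := hA0 h1
      refine ⟨(x + y, x / (x + y)), ⟨h1, h2⟩, ?_⟩
      simp only [T, Prod.mk.injEq]
      constructor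
      · field_simp
      · field_simp; ring
  have hmeas : MeasurableSet {z : ℝ × ℝ | z.1 + z.2 ∈ A ∧ z.1 / (z.1 + z.2) ∈ B} := by
    apply MeasurableSet.inter
    · exact (measurable_fst.add measurable_snd) hA
    · exact (measurable_fst.div (measurable_fst.add measurable_snd)) hB
  have hsub : {z : ℝ × ℝ | z.1 + z.2 ∈ A ∧ z.1 / (z.1 + z.2) ∈ B} ⊆ Set.Ioi 0 ×ˢ Set.Ioi 0 := by
    rw [← himg]
    rintro _ ⟨⟨v, u⟩, ⟨hv, hu⟩, rfl⟩
    have hv0 : 0 < v := hA0 hv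
    have hu0 := hB0 hu
    exact ⟨mul_pos hu0.1 hv0, mul_pos (by linarith [hu0.2]) hv0⟩
  have e : (fun ω => X ω + Y ω) ⁻¹' A ∩ (fun ω => X ω / (X ω + Y ω)) ⁻¹' B =
      (fun ω => (X ω, Y ω)) ⁻¹' {z : ℝ × ℝ | z.1 + z.2 ∈ A ∧ z.1 / (z.1 + z.2) ∈ B} := rfl
  rw [e, ← Measure.map_apply (hX.prodMk hY) hmeas, hjoint, withDensity_apply _ hmeas,
    Measure.restrict_restrict hmeas, Set.inter_eq_left.2 hsub, ← himg]
  have := lintegral_image_eq_lintegral_abs_det_fderiv_mul (volume : Measure (ℝ × ℝ)) (hA.prod hB)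
    (fun z _ => (hT' z).hasFDerivWithinAt) hinj
    (fun z => ENNReal.ofReal (fX z.1) * ENNReal.ofReal (fY z.2))
  refine Eq.trans this ?_
  refine setLIntegral_congr_fun (hA.prod hB) ?_
  rintro ⟨v, u⟩ ⟨hv, hu⟩
  have hv0 : 0 < v := hA0 hv
  have hx := hfXpos (u * v) (mul_pos (hB0 hu).1 hv0)
  simp only [hdet, abs_neg, abs_of_pos hv0, T]
  rw [← ENNReal.ofReal_mul hx.le, ← ENNReal.ofReal_mul hv0.le, mul_assoc]

open Filter Topology in
lemma luk_local (q : ℝ × ℝ → ℝ) (hqc : ContinuousOn q (Set.Ioi 0 ×ˢ Set.Ioo 0 1))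
    (hqp : ∀ z ∈ Set.Ioi (0:ℝ) ×ˢ Set.Ioo (0:ℝ) 1, 0 < q z) (v u : ℝ) (hv : 0 < v) (hu : u ∈ Set.Ioo (0:ℝ) 1)
    (k : ℝ) (hk : 1 < k) :
    ∀ᶠ r in 𝓝[>] (0:ℝ), Metric.ball v r ⊆ Set.Ioi 0 ∧ Metric.ball u r ⊆ Set.Ioo 0 1 ∧
      ENNReal.ofReal (q (v, u) / k * (2 * r) ^ 2) ≤
        ∫⁻ z in Metric.ball v r ×ˢ Metric.ball u r, ENNReal.ofReal (q z) ∧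
      ∫⁻ z in Metric.ball v r ×ˢ Metric.ball u r, ENNReal.ofReal (q z) ≤
        ENNReal.ofReal (k * q (v, u) * (2 * r) ^ 2) := by
  have hopen : IsOpen (Set.Ioi (0:ℝ) ×ˢ Set.Ioo (0:ℝ) 1) := isOpen_Ioi.prod isOpen_Ioo
  have hmem : (v, u) ∈ Set.Ioi (0:ℝ) ×ˢ Set.Ioo (0:ℝ) 1 := ⟨hv, hu⟩
  have hq0 := hqp _ hmem
  have hc : ContinuousAt q (v, u) := hqc.continuousAt (hopen.mem_nhds hmem)
  have h1 : ∀ᶠ z in 𝓝 (v, u), q (v, u) / k < q z :=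
    hc.eventually (lt_mem_nhds (div_lt_self hq0 hk))
  have h2 : ∀ᶠ z in 𝓝 (v, u), q z < k * q (v, u) :=
    hc.eventually (gt_mem_nhds (by nlinarith))
  obtain ⟨ε, hε, hb⟩ := Metric.eventually_nhds_iff_ball.1 (h1.and h2)
  obtain ⟨ε₁, hε₁, hb₁⟩ := Metric.isOpen_iff.1 isOpen_Ioi v (show v ∈ Set.Ioi 0 from hv)
  obtain ⟨ε₂, hε₂, hb₂⟩ := Metric.isOpen_iff.1 isOpen_Ioo u hu
  have hpos : 0 < min ε (min ε₁ ε₂) := by positivity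
  filter_upwards [Ioo_mem_nhdsGT hpos] with r hr
  have hr1 : r ≤ ε := hr.2.le.trans (min_le_left _ _)
  have hr2 : r ≤ ε₁ := hr.2.le.trans ((min_le_right _ _).trans (min_le_left _ _))
  have hr3 : r ≤ ε₂ := hr.2.le.trans ((min_le_right _ _).trans (min_le_right _ _))
  have hvol : volume (Metric.ball v r ×ˢ Metric.ball u r) = ENNReal.ofReal ((2 * r) ^ 2) := by
    rw [Measure.volume_eq_prod, Measure.prod_prod, Real.volume_ball, Real.volume_ball,
      ← ENNReal.ofReal_mul (by linarith [hr.1]), sq]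
  have hms : MeasurableSet (Metric.ball v r ×ˢ Metric.ball u r) :=
    measurableSet_ball.prod measurableSet_ball
  have hin : ∀ z ∈ Metric.ball v r ×ˢ Metric.ball u r, q (v, u) / k < q z ∧ q z < k * q (v, u) := by
    intro z hz
    apply hb
    rw [ball_prod_same] at hz
    exact Metric.ball_subset_ball hr1 hz
  refine ⟨(Metric.ball_subset_ball hr2).trans hb₁, (Metric.ball_subset_ball hr3).trans hb₂, ?_, ?_⟩
  · rw [ENNReal.ofReal_mul (by positivity), ← hvol, ← setLIntegral_const]
    exact setLIntegral_mono' hms fun z hz => ENNReal.ofReal_le_ofReal (hin z hz).1.le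
  · rw [ENNReal.ofReal_mul (by positivity), ← hvol, ← setLIntegral_const]
    exact setLIntegral_mono' hms fun z hz => ENNReal.ofReal_le_ofReal (hin z hz).2.le

open Filter Topology in
lemma luk_cross_le (q : ℝ × ℝ → ℝ) (hqc : ContinuousOn q (Set.Ioi 0 ×ˢ Set.Ioo 0 1))
    (hqp : ∀ z ∈ Set.Ioi (0:ℝ) ×ˢ Set.Ioo (0:ℝ) 1, 0 < q z)
    (hI : ∀ A A' B B' : Set ℝ, MeasurableSet A → MeasurableSet A' → MeasurableSet B →
      MeasurableSet B' → A ⊆ Set.Ioi 0 → A' ⊆ Set.Ioi 0 → B ⊆ Set.Ioo 0 1 → B' ⊆ Set.Ioo 0 1 →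
      (∫⁻ z in A ×ˢ B, ENNReal.ofReal (q z)) * (∫⁻ z in A' ×ˢ B', ENNReal.ofReal (q z)) =
      (∫⁻ z in A ×ˢ B', ENNReal.ofReal (q z)) * (∫⁻ z in A' ×ˢ B, ENNReal.ofReal (q z)))
    (v v' u u' : ℝ) (hv : 0 < v) (hv' : 0 < v') (hu : u ∈ Set.Ioo (0:ℝ) 1)
    (hu' : u' ∈ Set.Ioo (0:ℝ) 1) :
    q (v, u) * q (v', u') ≤ q (v, u') * q (v', u) := by
  have q1 := hqp (v, u) ⟨hv, hu⟩
  have q2 := hqp (v', u') ⟨hv', hu'⟩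
  have q3 := hqp (v, u') ⟨hv, hu'⟩
  have q4 := hqp (v', u) ⟨hv', hu⟩
  have key : ∀ k : ℝ, 1 < k → q (v, u) * q (v', u') ≤ k ^ 4 * (q (v, u') * q (v', u)) := by
    intro k hk
    have hk0 : 0 < k := by linarith
    obtain ⟨r, hr, ⟨a1, b1, l1, -⟩, ⟨a2, b2, l2, -⟩, ⟨-, -, -, l3⟩, ⟨-, -, -, l4⟩⟩ :=
      ((eventually_mem_nhdsWithin (a := (0:ℝ)) (s := Set.Ioi 0)).and
      ((luk_local q hqc hqp v u hv hu k hk).and ((luk_local q hqc hqp v' u' hv' hu' k hk).and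
      ((luk_local q hqc hqp v u' hv hu' k hk).and (luk_local q hqc hqp v' u hv' hu k hk))))).exists
    have hr : 0 < r := hr
    have h := (mul_le_mul' l1 l2).trans ((hI _ _ _ _ measurableSet_ball measurableSet_ball
      measurableSet_ball measurableSet_ball a1 a2 b1 b2).le.trans (mul_le_mul' l3 l4))
    rw [← ENNReal.ofReal_mul (by positivity), ← ENNReal.ofReal_mul (by positivity),
      ENNReal.ofReal_le_ofReal_iff (by positivity)] at h
    have e1 : q (v, u) / k * (2 * r) ^ 2 * (q (v', u') / k * (2 * r) ^ 2) =
      (q (v, u) * q (v', u')) / k ^ 2 * (2 * r) ^ 4 := by field_simp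
    have e2 : k * q (v, u') * (2 * r) ^ 2 * (k * q (v', u) * (2 * r) ^ 2) =
      (k ^ 2 * (q (v, u') * q (v', u))) * (2 * r) ^ 4 := by ring
    rw [e1, e2] at h
    have h' := le_of_mul_le_mul_right h (by positivity)
    rw [div_le_iff₀ (by positivity)] at h'
    linarith
  have ht : Tendsto (fun k : ℝ => k ^ 4 * (q (v, u') * q (v', u))) (𝓝[>] 1)
      (𝓝 (1 ^ 4 * (q (v, u') * q (v', u)))) :=
    (Continuous.tendsto (by fun_prop) 1).mono_left nhdsWithin_le_nhds
  rw [one_pow, one_mul] at ht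
  exact ge_of_tendsto ht (eventually_mem_nhdsWithin.mono fun k hk => key k hk)

lemma luk_additive (E : ℝ → ℝ) (hE : Continuous E) (hadd : ∀ s t, E (s + t) = E s + E t) (t : ℝ) :
    E t = t * E 1 := by
  have := map_real_smul (AddMonoidHom.mk' E hadd) hE t 1
  simpa using this

lemma luk_pexider (f g h : ℝ → ℝ) (hf : ContinuousOn f (Set.Ioi 0))
    (H : ∀ x > 0, ∀ y > 0, f x + g y = h (x + y)) :
    ∃ α β γ : ℝ, (∀ x > 0, f x = α + β * x) ∧ ∀ x > 0, g x = γ + β * x := by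
  have hfg : ∀ x > 0, g x = f x + (g 1 - f 1) := by
    intro x hx
    have h1 := H x hx 1 one_pos
    have h2 := H 1 one_pos x hx
    rw [add_comm x 1] at h1
    linarith
  have hJ : ∀ a > 0, ∀ b > 0, ∀ c > 0, ∀ d > 0, a + b = c + d → f a + f b = f c + f d := by
    intro a ha b hb c hc d hd e
    have h1 := H a ha b hb
    have h2 := H c hc d hd
    rw [hfg b hb] at h1
    rw [hfg d hd, ← e] at h2
    linarith
  have hp : ∀ t : ℝ, 0 < 1 + max t 0 := fun t => by have := le_max_right t 0; linarith
  have hE := luk_additive (fun t => f (1 + max t 0) - f (1 + max (-t) 0)) ?_ ?_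
  · have hd : ∀ x > 0, f x = f 1 + (x - 1) * (f 2 - f 1) := by
      intro x hx
      have h1 := hE (x - 1)
      have h2 := hJ (1 + max (x - 1) 0) (hp _) 1 one_pos (1 + max (-(x - 1)) 0) (hp _) x hx (by
        rcases le_total x 1 with h | h
        · rw [max_eq_right (by linarith), max_eq_left (by linarith)]; ring
        · rw [max_eq_left (by linarith), max_eq_right (by linarith)]; ring)
      norm_num at h1
      norm_num at h2
      linarith
    refine ⟨f 1 - (f 2 - f 1), f 2 - f 1, g 1 - (f 2 - f 1), fun x hx => ?_, fun x hx => ?_⟩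
    · rw [hd x hx]; ring
    · rw [hfg x hx, hd x hx]; ring
  · apply Continuous.sub
    · exact hf.comp_continuous (by fun_prop) (fun t => hp t)
    · exact hf.comp_continuous (by fun_prop) (fun t => hp (-t))
  · intro s t
    have hn : ∀ t : ℝ, max t 0 - max (-t) 0 = t := by
      intro t
      rcases le_total t 0 with h | h
      · rw [max_eq_right h, max_eq_left (by linarith)]; ring
      · rw [max_eq_left h, max_eq_right (by linarith)]; ring
    have hn0 : ∀ t : ℝ, 0 ≤ max t 0 := fun t => le_max_right _ _
    have n1 := hn s
    have n2 := hn t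
    have n3 := hn (s + t)
    have p1 := hn0 s
    have p2 := hn0 t
    have p3 := hn0 (s + t)
    have p4 := hn0 (-s)
    have p5 := hn0 (-t)
    have p6 := hn0 (-(s + t))
    generalize max s 0 = s1 at *
    generalize max (-s) 0 = s2 at *
    generalize max t 0 = t1 at *
    generalize max (-t) 0 = t2 at *
    generalize max (s + t) 0 = w1 at *
    generalize max (-(s + t)) 0 = w2 at *
    have j1 := hJ (1 + s1) (by linarith) (1 + t1) (by linarith) (1 + s1 + t1) (by linarith) 1 one_pos (by ring)
    have j2 := hJ (1 + s2) (by linarith) (1 + t2) (by linarith) (1 + s2 + t2) (by linarith) 1 one_pos (by ring)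
    have j3 := hJ (1 + w1) (by linarith) (1 + s2 + t2) (by linarith) (1 + w2) (by linarith)
      (1 + s1 + t1) (by linarith) (by linarith)
    linarith

/-- from scaling relation to closed form -/
lemma luk_scale (F α β : ℝ → ℝ) (hF : ContinuousOn F (Set.Ioi 0))
    (H : ∀ s > 0, ∀ x > 0, F (s * x) - F x = α s + β s * x) :
    ∃ c : ℝ, ∀ x > 0, F x = F 1 + c * Real.log x + β 2 * (x - 1) := by
  have hab : ∀ s > 0, ∀ t > 0, ∀ x > 0,
      α (s * t) + β (s * t) * x = α s + β s * (t * x) + (α t + β t * x) := by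
    intro s hs t ht x hx
    rw [← H _ (mul_pos hs ht) x hx, ← H s hs _ (mul_pos ht hx), ← H t ht x hx, mul_assoc]
    ring
  have hα : ∀ s > 0, ∀ t > 0, α (s * t) = α s + α t := by
    intro s hs t ht
    have h1 := hab s hs t ht 1 one_pos
    have h2 := hab s hs t ht 2 two_pos
    linarith
  have hβ : ∀ s > 0, ∀ t > 0, β (s * t) = β s * t + β t := by
    intro s hs t ht
    have h1 := hab s hs t ht 1 one_pos
    have h2 := hab s hs t ht 2 two_pos
    linarith
  have hβ' : ∀ s > 0, β s = β 2 * (s - 1) := by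
    intro s hs
    have h1 := hβ s hs 2 two_pos
    have h2 := hβ 2 two_pos s hs
    rw [mul_comm] at h2
    linarith
  have hαF : ∀ s > 0, α s = F s - F 1 - β 2 * (s - 1) := by
    intro s hs
    have := H s hs 1 one_pos
    rw [mul_one, mul_one, hβ' s hs] at this
    linarith
  have hlin := luk_additive (fun t => α (Real.exp t)) ?_ ?_
  · refine ⟨α (Real.exp 1), fun x hx => ?_⟩
    have h1 := hlin (Real.log x)
    simp only [Real.exp_log hx] at h1
    have h2 := hαF x hx
    linarith
  · have : (fun t => α (Real.exp t)) =
      fun t => F (Real.exp t) - F 1 - β 2 * (Real.exp t - 1) := by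
      ext t; exact hαF _ (Real.exp_pos t)
    rw [this]
    have : Continuous fun t => F (Real.exp t) :=
      hF.comp_continuous (by fun_prop) (fun t => Real.exp_pos t)
    exact (this.sub continuous_const).sub (by fun_prop)
  · intro s t
    simp only [Real.exp_add]
    exact hα _ (Real.exp_pos s) _ (Real.exp_pos t)

lemma luk_gamma (f : ℝ → ℝ) (C b c : ℝ) (hC : 0 < C)
    (hf : ∀ x > 0, f x = C * x ^ c * Real.exp (b * x))
    (hint : IntegrableOn f (Set.Ioi 0)) (h1 : ∫ x in Set.Ioi 0, f x = 1) :
    b < 0 ∧ 0 < c + 1 ∧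
    ∀ x > (0:ℝ), f x = (-b) ^ (c + 1) / Real.Gamma (c + 1) * x ^ (c + 1 - 1) * Real.exp (-(-b) * x) := by
  have hint' : IntegrableOn (fun x => C * x ^ c * Real.exp (b * x)) (Set.Ioi 0) :=
    hint.congr_fun (fun x hx => hf x hx) measurableSet_Ioi
  have hmeas : Measurable fun x : ℝ => x ^ c := by fun_prop
  have hc : -1 < c := by
    rw [← intervalIntegral.integrableOn_Ioo_rpow_iff (t := 1) one_pos]
    have := (hint'.mono_set (show Set.Ioo (0:ℝ) 1 ⊆ Set.Ioi 0 from fun x hx => hx.1)).const_mul (C⁻¹ * Real.exp |b|)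
    refine Integrable.mono this hmeas.aestronglyMeasurable ?_
    refine ae_restrict_of_forall_mem measurableSet_Ioo fun x hx => ?_
    have hx0 : 0 < x ^ c := Real.rpow_pos_of_pos hx.1 _
    rw [Real.norm_of_nonneg hx0.le, Real.norm_of_nonneg (by positivity)]
    have e : C⁻¹ * Real.exp |b| * (C * x ^ c * Real.exp (b * x)) =
        x ^ c * Real.exp (|b| + b * x) := by rw [Real.exp_add]; field_simp
    rw [e]
    refine le_mul_of_one_le_right hx0.le (Real.one_le_exp ?_)
    have := neg_abs_le b
    have := abs_nonneg b
    nlinarith [hx.1, hx.2]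
  have hb : b < 0 := by
    by_contra hb
    push Not at hb
    have : c < -1 := by
      rw [← integrableOn_Ioi_rpow_iff (t := 1) one_pos]
      have := (hint'.mono_set (Set.Ioi_subset_Ioi (zero_le_one (α := ℝ)))).const_mul C⁻¹
      refine Integrable.mono this hmeas.aestronglyMeasurable ?_
      refine ae_restrict_of_forall_mem measurableSet_Ioi fun x hx => ?_
      have hx' : (0:ℝ) < x := one_pos.trans hx
      have hx0 : 0 < x ^ c := Real.rpow_pos_of_pos hx' _
      rw [Real.norm_of_nonneg hx0.le, Real.norm_of_nonneg (by positivity)]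
      have e : C⁻¹ * (C * x ^ c * Real.exp (b * x)) = x ^ c * Real.exp (b * x) := by field_simp
      rw [e]
      exact le_mul_of_one_le_right hx0.le (Real.one_le_exp (by positivity))
    linarith
  refine ⟨hb, by linarith, fun x hx => ?_⟩
  have hp : 0 < c + 1 := by linarith
  have hI := Real.integral_rpow_mul_exp_neg_mul_Ioi hp (neg_pos.2 hb)
  have e : ∫ x in Set.Ioi 0, f x =
      ∫ t in Set.Ioi (0:ℝ), C * (t ^ (c + 1 - 1) * Real.exp (-(-b * t))) := by
    refine setIntegral_congr_fun measurableSet_Ioi fun x hx => ?_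
    simp only [hf x hx]
    rw [add_sub_cancel_right, neg_mul, neg_neg, mul_assoc]
  rw [e, integral_const_mul, hI, one_div, Real.inv_rpow (by linarith)] at h1
  have hG := Real.Gamma_pos_of_pos hp
  have hB : 0 < (-b) ^ (c + 1) := Real.rpow_pos_of_pos (by linarith) _
  have hCe : C = (-b) ^ (c + 1) / Real.Gamma (c + 1) := by
    field_simp at h1 ⊢
    linarith
  rw [hf x hx, ← hCe, add_sub_cancel_right, neg_neg]

/-- Lukács' theorem (scalar case): if `X`, `Y` are independent positive random
variables with strictly positive continuous densities on `(0,∞)` and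
`V = X + Y`, `U = X/(X+Y)` are independent, then `X` and `Y` have Gamma
distributions with the same rate parameter. -/
theorem lukacs_characterization {Ω : Type*} [MeasurableSpace Ω]
    (μ : Measure Ω) [IsProbabilityMeasure μ]
    (X Y : Ω → ℝ) (hX : Measurable X) (hY : Measurable Y)
    (fX fY : ℝ → ℝ)
    (hfXpos : ∀ x > (0:ℝ), 0 < fX x) (hfYpos : ∀ x > (0:ℝ), 0 < fY x)
    (hfXcont : ContinuousOn fX (Set.Ioi 0)) (hfYcont : ContinuousOn fY (Set.Ioi 0))
    (hXd : μ.map X = (volume.restrict (Set.Ioi 0)).withDensity fun x => ENNReal.ofReal (fX x))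
    (hYd : μ.map Y = (volume.restrict (Set.Ioi 0)).withDensity fun x => ENNReal.ofReal (fY x))
    (hXY : IndepFun X Y μ)
    (hUV : IndepFun (fun ω => X ω + Y ω) (fun ω => X ω / (X ω + Y ω)) μ) :
    ∃ a > (0:ℝ), ∃ p₁ > (0:ℝ), ∃ p₂ > (0:ℝ),
      (∀ x > (0:ℝ), fX x = a ^ p₁ / Real.Gamma p₁ * x ^ (p₁ - 1) * Real.exp (-a * x)) ∧
      ∀ x > (0:ℝ), fY x = a ^ p₂ / Real.Gamma p₂ * x ^ (p₂ - 1) * Real.exp (-a * x) := by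
  let q : ℝ × ℝ → ℝ := fun z => z.1 * fX (z.2 * z.1) * fY ((1 - z.2) * z.1)
  have hqc : ContinuousOn q (Set.Ioi 0 ×ˢ Set.Ioo 0 1) := by
    have h1 : ContinuousOn (fun z : ℝ × ℝ => fX (z.2 * z.1)) (Set.Ioi 0 ×ˢ Set.Ioo 0 1) :=
      hfXcont.comp (by fun_prop) (fun z hz => mul_pos hz.2.1 hz.1)
    have h2 : ContinuousOn (fun z : ℝ × ℝ => fY ((1 - z.2) * z.1)) (Set.Ioi 0 ×ˢ Set.Ioo 0 1) :=
      hfYcont.comp (by fun_prop) (fun z hz => mul_pos (sub_pos.2 hz.2.2) hz.1)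
    exact (continuousOn_fst.mul h1).mul h2
  have hqp : ∀ z ∈ Set.Ioi (0:ℝ) ×ˢ Set.Ioo (0:ℝ) 1, 0 < q z := fun z hz =>
    mul_pos (mul_pos hz.1 (hfXpos _ (mul_pos hz.2.1 hz.1)))
      (hfYpos _ (mul_pos (sub_pos.2 hz.2.2) hz.1))
  have hI : ∀ A A' B B' : Set ℝ, MeasurableSet A → MeasurableSet A' → MeasurableSet B →
      MeasurableSet B' → A ⊆ Set.Ioi 0 → A' ⊆ Set.Ioi 0 → B ⊆ Set.Ioo 0 1 → B' ⊆ Set.Ioo 0 1 →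
      (∫⁻ z in A ×ˢ B, ENNReal.ofReal (q z)) * (∫⁻ z in A' ×ˢ B', ENNReal.ofReal (q z)) =
      (∫⁻ z in A ×ˢ B', ENNReal.ofReal (q z)) * (∫⁻ z in A' ×ˢ B, ENNReal.ofReal (q z)) := by
    intro A A' B B' hA hA' hB hB' sA sA' sB sB'
    have hr := luk_rect μ X Y hX hY fX fY hfXpos hfXcont hfYcont hXd hYd hXY
    have hm := fun A B hA hB => hUV.measure_inter_preimage_eq_mul A B hA hB
    simp only [q]
    rw [← hr A B hA hB sA sB, ← hr A' B' hA' hB' sA' sB', ← hr A B' hA hB' sA sB',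
      ← hr A' B hA' hB sA' sB, hm A B hA hB, hm A' B' hA' hB', hm A B' hA hB', hm A' B hA' hB]
    ring
  have hcross : ∀ v v' u u' : ℝ, 0 < v → 0 < v' → u ∈ Set.Ioo (0:ℝ) 1 → u' ∈ Set.Ioo (0:ℝ) 1 →
      q (v, u) * q (v', u') = q (v, u') * q (v', u) := fun v v' u u' hv hv' hu hu' =>
    le_antisymm (luk_cross_le q hqc hqp hI v v' u u' hv hv' hu hu')
      (luk_cross_le q hqc hqp hI v v' u' u hv hv' hu' hu)
  have hFc : ContinuousOn (fun x => Real.log (fX x)) (Set.Ioi 0) :=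
    hfXcont.log fun x hx => (hfXpos x hx).ne'
  have hGc : ContinuousOn (fun x => Real.log (fY x)) (Set.Ioi 0) :=
    hfYcont.log fun x hx => (hfYpos x hx).ne'
  have hlogq : ∀ x > 0, ∀ y > 0, Real.log (q (x + y, x / (x + y))) =
      Real.log (x + y) + Real.log (fX x) + Real.log (fY y) := by
    intro x hx y hy
    have hxy : 0 < x + y := add_pos hx hy
    have e1 : x / (x + y) * (x + y) = x := by field_simp
    have e2 : (1 - x / (x + y)) * (x + y) = y := by field_simp; ring
    simp only [q, e1, e2]
    rw [Real.log_mul (mul_pos hxy (hfXpos x hx)).ne' (hfYpos y hy).ne',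
      Real.log_mul hxy.ne' (hfXpos x hx).ne']
  have hhalf : (1 / 2 : ℝ) ∈ Set.Ioo (0:ℝ) 1 := by constructor <;> norm_num
  have hpex : ∀ s : ℝ, ∃ α β γ : ℝ, 0 < s →
      (∀ x > 0, Real.log (fX (s * x)) - Real.log (fX x) = α + β * x) ∧
      ∀ x > 0, Real.log (fY (s * x)) - Real.log (fY x) = γ + β * x := by
    intro s
    by_cases hs : 0 < s
    swap
    · exact ⟨0, 0, 0, fun h => absurd h hs⟩
    obtain ⟨α, β, γ, h1, h2⟩ := luk_pexider (fun x => Real.log (fX (s * x)) - Real.log (fX x))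
      (fun x => Real.log (fY (s * x)) - Real.log (fY x))
      (fun w => Real.log (q (s * w, 1 / 2)) - Real.log (q (w, 1 / 2)) - Real.log s)
      ((hFc.comp (f := fun x : ℝ => s * x) (by fun_prop) (fun x hx => mul_pos hs hx)).sub hFc) (by
        intro x hx y hy
        have hxy : 0 < x + y := add_pos hx hy
        have hsxy : 0 < s * (x + y) := mul_pos hs hxy
        have hu : x / (x + y) ∈ Set.Ioo (0:ℝ) 1 :=
          ⟨div_pos hx hxy, (div_lt_one hxy).2 (by linarith)⟩
        have h := congrArg Real.log (hcross (s * (x + y)) (x + y) (x / (x + y)) (1 / 2)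
          hsxy hxy hu hhalf)
        rw [Real.log_mul (hqp (_, _) ⟨hsxy, hu⟩).ne' (hqp (_, _) ⟨hxy, hhalf⟩).ne',
          Real.log_mul (hqp (_, _) ⟨hsxy, hhalf⟩).ne' (hqp (_, _) ⟨hxy, hu⟩).ne', hlogq x hx y hy] at h
        have h' := hlogq (s * x) (mul_pos hs hx) (s * y) (mul_pos hs hy)
        rw [← mul_add, mul_div_mul_left _ _ hs.ne', Real.log_mul hs.ne' hxy.ne'] at h'
        linarith)
    exact ⟨α, β, γ, fun _ => ⟨h1, h2⟩⟩
  choose α β γ hαβγ using hpex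
  obtain ⟨c₁, hc₁⟩ := luk_scale _ α β hFc (fun s hs x hx => (hαβγ s hs).1 x hx)
  obtain ⟨c₂, hc₂⟩ := luk_scale _ γ β hGc (fun s hs x hx => (hαβγ s hs).2 x hx)
  have hform : ∀ (f : ℝ → ℝ) (c : ℝ), (∀ x > 0, 0 < f x) →
      (∀ x > 0, Real.log (f x) = Real.log (f 1) + c * Real.log x + β 2 * (x - 1)) →
      ∀ x > 0, f x = (f 1 * Real.exp (-β 2)) * x ^ c * Real.exp (β 2 * x) := by
    intro f c hf h x hx
    rw [← Real.exp_log (hf x hx), h x hx, Real.rpow_def_of_pos hx, Real.exp_add, Real.exp_add,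
      Real.exp_log (hf 1 one_pos), mul_assoc, mul_assoc, mul_assoc,
      ← Real.exp_add, ← Real.exp_add, ← Real.exp_add]
    congr 2
    ring
  have hnorm : ∀ (Z : Ω → ℝ) (f : ℝ → ℝ), Measurable Z → (∀ x > 0, 0 < f x) →
      ContinuousOn f (Set.Ioi 0) →
      μ.map Z = (volume.restrict (Set.Ioi 0)).withDensity (fun x => ENNReal.ofReal (f x)) →
      IntegrableOn f (Set.Ioi 0) ∧ ∫ x in Set.Ioi 0, f x = 1 := by
    intro Z f hZ hf hc hd
    have h1 : ∫⁻ x in Set.Ioi 0, ENNReal.ofReal (f x) = 1 := by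
      have : IsProbabilityMeasure (μ.map Z) := Measure.isProbabilityMeasure_map hZ.aemeasurable
      have := measure_univ (μ := μ.map Z)
      rwa [hd, withDensity_apply _ MeasurableSet.univ, Measure.restrict_univ] at this
    have hm := hc.aestronglyMeasurable (μ := volume) measurableSet_Ioi
    have hnn : 0 ≤ᵐ[volume.restrict (Set.Ioi 0)] f :=
      ae_restrict_of_forall_mem measurableSet_Ioi fun x hx => (hf x hx).le
    constructor
    · refine (lintegral_ofReal_ne_top_iff_integrable hm hnn).1 ?_
      rw [h1]; exact ENNReal.one_ne_top
    · rw [integral_eq_lintegral_of_nonneg_ae hnn hm, h1, ENNReal.toReal_one]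
  obtain ⟨iX, nX⟩ := hnorm X fX hX hfXpos hfXcont hXd
  obtain ⟨iY, nY⟩ := hnorm Y fY hY hfYpos hfYcont hYd
  obtain ⟨hb, hp₁, g₁⟩ := luk_gamma fX _ (β 2) c₁ (mul_pos (hfXpos 1 one_pos) (Real.exp_pos _))
    (hform fX c₁ hfXpos hc₁) iX nX
  obtain ⟨-, hp₂, g₂⟩ := luk_gamma fY _ (β 2) c₂ (mul_pos (hfYpos 1 one_pos) (Real.exp_pos _))
    (hform fY c₂ hfYpos hc₂) iY nY
  exact ⟨-β 2, neg_pos.2 hb, c₁ + 1, hp₁, c₂ + 1, hp₂, g₁, g₂⟩
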